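/- arXiv:math/0504577 — 2 statements merged into one kernel-verified Lean document; each statement's English description precedes it below -/
import Mathlib

section
/- Let X be a metric space, let 𝒰 be a cover of X by uniformly bounded sets with multiplicity at most m, suppose every subset of X of diameter at most L is contained in some member of 𝒰 (i.e. 𝒰 has Lebesgue number at least L), and let k > 0 satisfy 4k ≤ L. Then the family 𝒱 = { X \ N_k(X \ U) : U ∈ 𝒰 } (where N_k denotes the open k-neighborhood) is a cover of X by uniformly bounded sets, every subset of X of diameter strictly less than L − 2k is contained in some member of 𝒱, and the k-multiplicity of 𝒱 is at most m. -/
open Metric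

namespace AsDim

/-- A family of subsets is a cover if its union is everything. -/
def IsCover {X : Type*} (𝒰 : Set (Set X)) : Prop := ⋃₀ 𝒰 = Set.univ

/-- A family of subsets of a metric space is uniformly bounded if there is a
common finite bound on the diameters of its members. -/
def UnifBounded {X : Type*} [MetricSpace X] (𝒰 : Set (Set X)) : Prop :=
  ∃ B : ℝ, 0 ≤ B ∧ ∀ U ∈ 𝒰, EMetric.diam U ≤ ENNReal.ofReal B

/-- A family has Lebesgue number at least `lam` if every subset of diameter at most
`lam` is contained in some member of the family. -/
def LebesgueGE {X : Type*} [MetricSpace X] (𝒰 : Set (Set X)) (lam : ℝ) : Prop :=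
  ∀ A : Set X, EMetric.diam A ≤ ENNReal.ofReal lam → ∃ U ∈ 𝒰, A ⊆ U

/-- The multiplicity of a family: the supremum over points of the number of
members containing that point. -/
noncomputable def mult {X : Type*} (𝒰 : Set (Set X)) : ℕ∞ :=
  ⨆ x : X, {U | U ∈ 𝒰 ∧ x ∈ U}.encard

/-- The asymptotic dimension function:
`ad_X(lam) = min { mult 𝒰 : 𝒰 a uniformly bounded cover with Lebesgue number ≥ lam } - 1`. -/
noncomputable def adFun (X : Type*) [MetricSpace X] (lam : ℝ) : ℕ∞ :=
  sInf {m : ℕ∞ | ∃ 𝒰 : Set (Set X),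
    IsCover 𝒰 ∧ UnifBounded 𝒰 ∧ LebesgueGE 𝒰 lam ∧ m = mult 𝒰} - 1

/-- `f ≼ g` : there is `k ∈ ℕ` with `f x ≤ k * g (k*x+k) + k` for all `x > 0`. -/
def GrowLE (f g : ℝ → ℕ∞) : Prop :=
  ∃ k : ℕ, ∀ x : ℝ, 0 < x → f x ≤ (k : ℕ∞) * g ((k : ℝ) * x + (k : ℝ)) + (k : ℕ∞)

/-- `f ≈ g` : same growth. -/
def GrowEquiv (f g : ℝ → ℕ∞) : Prop := GrowLE f g ∧ GrowLE g f

/-- `asdim X ≤ n`. -/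
def AsdimLE (X : Type*) [MetricSpace X] (n : ℕ) : Prop :=
  ∀ lam : ℝ, 0 < lam → ∃ 𝒰 : Set (Set X),
    IsCover 𝒰 ∧ UnifBounded 𝒰 ∧ LebesgueGE 𝒰 lam ∧ mult 𝒰 ≤ (n : ℕ∞) + 1

/-- Bounded geometry (as a discrete space): uniform finite bound on the
cardinality of balls of each radius. -/
def BoundedGeometry (X : Type*) [MetricSpace X] : Prop :=
  ∀ r : ℝ, 0 < r → ∃ c : ℕ, ∀ x : X, (Metric.closedBall x r).encard ≤ (c : ℕ∞)

/-- `(lam, eps, C)`-quasi-isometry. -/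
def IsQuasiIsometry {X Y : Type*} [MetricSpace X] [MetricSpace Y]
    (lam eps C : ℝ) (f : X → Y) : Prop :=
  1 ≤ lam ∧ 0 ≤ eps ∧ 0 ≤ C ∧
  (∀ x x' : X, (1 / lam) * dist x x' - eps ≤ dist (f x) (f x') ∧
      dist (f x) (f x') ≤ lam * dist x x' + eps) ∧
  (∀ y : Y, ∃ x : X, dist y (f x) ≤ C)

/-- Two metric spaces are quasi-isometric if some quasi-isometry exists. -/
def QuasiIsometric (X Y : Type*) [MetricSpace X] [MetricSpace Y] : Prop :=
  ∃ (lam eps C : ℝ) (f : X → Y), IsQuasiIsometry lam eps C f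

/-- Word distance with respect to a generating set `S`. -/
noncomputable def wordDist {Γ : Type*} [Group Γ] (S : Set Γ) (g h : Γ) : ℕ :=
  sInf {n : ℕ | ∃ l : List Γ, (∀ x ∈ l, x ∈ S) ∧ l.length = n ∧ l.prod = g⁻¹ * h}

/-- The metric on the group `Γ` is the word metric of the finite symmetric
generating set `S`. -/
def IsWordMetric {Γ : Type*} [Group Γ] [MetricSpace Γ] (S : Finset Γ) : Prop :=
  (∀ s ∈ S, s⁻¹ ∈ S) ∧ Subgroup.closure (S : Set Γ) = ⊤ ∧
  ∀ g h : Γ, dist g h = wordDist (S : Set Γ) g h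

end AsDim

namespace AsDim

/-- The open `k`-neighborhood of a set. -/
def nbhd {X : Type*} [MetricSpace X] (k : ℝ) (A : Set X) : Set X :=
  {x : X | ∃ a ∈ A, dist x a < k}

/-!
Complement–thicken–complement is the upper adjoint of thickening: `A` is contained in the erosion
of `U` exactly when the thickening of `A` is contained in `U`. So a set fits into an eroded member
once its thickening, of diameter larger by at most `2k`, fits into a member of `𝒰`; and a point
whose `k`-ball meets the erosion of `U` lies in the thickening of that erosion, hence in `U`.
-/

section Erosion

variable {X : Type*} [PseudoEMetricSpace X] {δ : ℝ} {s t : Set X}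

/-- The erosion of `s` at scale `δ`, in the sense of mathematical morphology: what remains of `s`
once the open `δ`-thickening of its complement is removed. For `δ ≤ 0` it is the whole space, since
the thickening is then empty. -/
def erosion (δ : ℝ) (s : Set X) : Set X := (thickening δ sᶜ)ᶜ

theorem thickening_subset_iff_subset_erosion : thickening δ s ⊆ t ↔ s ⊆ erosion δ t := by
  constructor
  · intro h
    calc s ⊆ (thickening δ (thickening δ s)ᶜ)ᶜ := subset_compl_thickening_compl_thickening_self δ s
      _ ⊆ erosion δ t :=
        Set.compl_subset_compl.2 (thickening_subset_of_subset δ (Set.compl_subset_compl.2 h))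
  · intro h
    calc thickening δ s ⊆ thickening δ (erosion δ t) := thickening_subset_of_subset δ h
      _ ⊆ tᶜᶜ := thickening_compl_thickening_self_subset_compl δ tᶜ
      _ = t := compl_compl t

theorem gc_thickening_erosion (δ : ℝ) :
    GaloisConnection (thickening δ : Set X → Set X) (erosion δ) :=
  fun _ _ => thickening_subset_iff_subset_erosion

theorem thickening_erosion_subset (δ : ℝ) (s : Set X) : thickening δ (erosion δ s) ⊆ s :=
  (gc_thickening_erosion δ).l_u_le s

theorem erosion_subset (hδ : 0 < δ) (s : Set X) : erosion δ s ⊆ s :=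
  (self_subset_thickening hδ _).trans (thickening_erosion_subset δ s)

end Erosion

section ScaleMult

variable {X : Type*} [PseudoMetricSpace X]

/-- The `k`-multiplicity of a family: the supremum over points `x` of the number of members meeting
the open ball of radius `k` about `x`. -/
noncomputable def scaleMult (k : ℝ) (𝒱 : Set (Set X)) : ℕ∞ :=
  ⨆ x : X, {V | V ∈ 𝒱 ∧ (V ∩ ball x k).Nonempty}.encard

theorem mem_of_erosion_inter_ball_nonempty {k : ℝ} {U : Set X} {x : X}
    (h : (erosion k U ∩ ball x k).Nonempty) : x ∈ U := by
  obtain ⟨y, hyU, hyx⟩ := h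
  exact thickening_erosion_subset k U (mem_thickening_iff.2 ⟨y, hyU, mem_ball'.1 hyx⟩)

theorem scaleMult_image_erosion_le (k : ℝ) (𝒰 : Set (Set X)) :
    scaleMult k (erosion k '' 𝒰) ≤ mult 𝒰 := by
  refine iSup_mono fun x => ?_
  have hsub : {V | V ∈ erosion k '' 𝒰 ∧ (V ∩ ball x k).Nonempty} ⊆
      erosion k '' {U | U ∈ 𝒰 ∧ x ∈ U} := by
    rintro _ ⟨⟨U, hU, rfl⟩, hne⟩
    exact ⟨U, ⟨hU, mem_of_erosion_inter_ball_nonempty hne⟩, rfl⟩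
  exact (Set.encard_le_encard hsub).trans (Set.encard_image_le _ _)

end ScaleMult

section Cover

variable {X : Type*} [MetricSpace X] {𝒰 : Set (Set X)} {k lam : ℝ}

theorem compl_nbhd_compl (k : ℝ) (U : Set X) : (nbhd k Uᶜ)ᶜ = erosion k U :=
  congrArg compl (Set.ext fun _ => mem_thickening_iff.symm)

theorem LebesgueGE.isCover (h : LebesgueGE 𝒰 lam) : IsCover 𝒰 := by
  refine Set.eq_univ_of_forall fun x => ?_
  obtain ⟨U, hU, hxU⟩ := h {x} (ediam_singleton.trans_le zero_le)
  exact ⟨U, hU, Set.singleton_subset_iff.1 hxU⟩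

theorem LebesgueGE.image_erosion (hk : 0 ≤ k) (hlam : 0 ≤ lam) (h : LebesgueGE 𝒰 (lam + 2 * k)) :
    LebesgueGE (erosion k '' 𝒰) lam := by
  intro A hA
  have hdiam : ediam (thickening k A) ≤ ENNReal.ofReal (lam + 2 * k) := by
    lift k to NNReal using hk
    calc ediam (thickening k A) ≤ ediam A + 2 * k := ediam_thickening_le k
      _ ≤ ENNReal.ofReal lam + 2 * k := by gcongr; exact hA
      _ = ENNReal.ofReal (lam + 2 * k) := by
        rw [ENNReal.ofReal_add hlam (by positivity), ENNReal.ofReal_mul zero_le_two,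
          ENNReal.ofReal_ofNat, ENNReal.ofReal_coe_nnreal]
  obtain ⟨U, hU, hAU⟩ := h _ hdiam
  exact ⟨erosion k U, Set.mem_image_of_mem _ hU, thickening_subset_iff_subset_erosion.1 hAU⟩

theorem UnifBounded.image_of_subset {f : Set X → Set X} (h : UnifBounded 𝒰)
    (hf : ∀ U ∈ 𝒰, f U ⊆ U) : UnifBounded (f '' 𝒰) := by
  obtain ⟨B, hB, hdiam⟩ := h
  exact ⟨B, hB, Set.forall_mem_image.2 fun U hU => (ediam_mono (hf U hU)).trans (hdiam U hU)⟩

end Cover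

theorem shrinking_cover_general {X : Type*} [MetricSpace X] (𝒰 : Set (Set X)) (L k : ℝ)
    (hbdd : UnifBounded 𝒰) (hLeb : LebesgueGE 𝒰 L) (hk : 0 < k) (hkL : 2 * k ≤ L) :
    IsCover (erosion k '' 𝒰) ∧ UnifBounded (erosion k '' 𝒰) ∧
      LebesgueGE (erosion k '' 𝒰) (L - 2 * k) ∧ scaleMult k (erosion k '' 𝒰) ≤ mult 𝒰 := by
  have hLeb' : LebesgueGE (erosion k '' 𝒰) (L - 2 * k) :=
    LebesgueGE.image_erosion hk.le (sub_nonneg.2 hkL) (by rwa [sub_add_cancel])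
  exact ⟨hLeb'.isCover, hbdd.image_of_subset fun U _ => erosion_subset hk U, hLeb',
    scaleMult_image_erosion_le k 𝒰⟩

/-- Shrinking a cover: removing open `k`-neighborhoods of complements yields a
uniformly bounded cover with Lebesgue number at least `L - 2k` and
`k`-multiplicity at most the multiplicity of the original cover. -/
theorem shrinking_cover {X : Type*} [MetricSpace X] (𝒰 : Set (Set X)) (m : ℕ∞)
    (L k : ℝ)
    (hcover : IsCover 𝒰) (hbdd : UnifBounded 𝒰) (hmult : mult 𝒰 ≤ m)
    (hLeb : LebesgueGE 𝒰 L) (hk : 0 < k) (hkL : 4 * k ≤ L) :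
    IsCover ((fun U : Set X => (nbhd k Uᶜ)ᶜ) '' 𝒰) ∧
    UnifBounded ((fun U : Set X => (nbhd k Uᶜ)ᶜ) '' 𝒰) ∧
    (∀ A : Set X, EMetric.diam A < ENNReal.ofReal (L - 2 * k) →
      ∃ V ∈ (fun U : Set X => (nbhd k Uᶜ)ᶜ) '' 𝒰, A ⊆ V) ∧
    (∀ x : X,
      {V | V ∈ (fun U : Set X => (nbhd k Uᶜ)ᶜ) '' 𝒰 ∧
        (V ∩ Metric.ball x k).Nonempty}.encard ≤ m) := by
  simp only [compl_nbhd_compl]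
  obtain ⟨hcov, hbd, hleb, hle⟩ := shrinking_cover_general 𝒰 L k hbdd hLeb hk (by linarith)
  exact ⟨hcov, hbd, fun A hA => hleb A hA.le, fun x => (le_iSup _ x).trans (hle.trans hmult)⟩

end AsDim
end

section
/- Let X and Y be metric spaces with bounded geometry (as discrete spaces). If X and Y are quasi-isometric, then ad_X ≈ ad_Y, i.e. the asymptotic dimension functions of X and Y have the same growth. -/
open Metric

namespace AsDim

/-!
Pulling a cover of `Y` back along `f : X → Y` gives a cover of `X` whose multiplicity is no larger.
If `d(f x, f x') ≤ a d(x, x') + b`, a Lebesgue number `a r + b` of the cover becomes a Lebesgue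
number `r` of its pullback, and if `f` is uniformly proper, the pullback is still uniformly bounded.
Hence such an `f` gives `ad_X ≼ ad_Y`. A quasi-isometry satisfies both conditions, and so does any
quasi-inverse of it.
-/

/-- A map between metric spaces is uniformly proper (or effectively proper) if points with nearby
images are nearby, uniformly; this is the lower half of the notion of a coarse embedding. -/
def UniformlyProper {X Y : Type*} [PseudoMetricSpace X] [PseudoMetricSpace Y] (f : X → Y) : Prop :=
  ∀ B : ℝ, ∃ B' : ℝ, ∀ x x' : X, dist (f x) (f x') ≤ B → dist x x' ≤ B'

theorem dist_le_of_ediam_le_ofReal {X : Type*} [PseudoMetricSpace X] {A : Set X} {r : ℝ}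
    (hr : 0 ≤ r) (hA : ediam A ≤ ENNReal.ofReal r) {x y : X} (hx : x ∈ A) (hy : y ∈ A) :
    dist x y ≤ r :=
  (edist_le_ofReal hr).1 ((edist_le_ediam_of_mem hx hy).trans hA)

theorem GrowLE.of_forall_le_affine {u v : ℝ → ℕ∞} (hv : Monotone v) (a b : ℝ)
    (h : ∀ x, 0 < x → u x ≤ v (a * x + b)) : GrowLE u v := by
  obtain ⟨k, hk⟩ := exists_nat_ge (max 1 (max a b))
  obtain ⟨one_le_k, a_le_k, b_le_k⟩ : (1 : ℝ) ≤ k ∧ a ≤ k ∧ b ≤ k := by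
    simpa only [max_le_iff] using hk
  refine ⟨k, fun x hx => ?_⟩
  calc u x ≤ v (a * x + b) := h x hx
    _ ≤ v (k * x + k) := hv (by gcongr)
    _ ≤ k * v (k * x + k) := le_mul_of_one_le_left' (by exact_mod_cast one_le_k)
    _ ≤ k * v (k * x + k) + k := le_self_add

section Preimage

variable {X Y : Type*} {𝒰 : Set (Set Y)}

theorem IsCover.preimage (h𝒰 : IsCover 𝒰) (f : X → Y) : IsCover (Set.preimage f '' 𝒰) := by
  rw [IsCover, Set.sUnion_image, ← Set.preimage_sUnion, h𝒰, Set.preimage_univ]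

theorem mult_image_preimage_le (f : X → Y) (𝒰 : Set (Set Y)) :
    mult (Set.preimage f '' 𝒰) ≤ mult 𝒰 := by
  refine iSup_le fun x => ?_
  have preimages_through_x : {V | V ∈ Set.preimage f '' 𝒰 ∧ x ∈ V} ⊆
      Set.preimage f '' {U | U ∈ 𝒰 ∧ f x ∈ U} := by
    rintro _ ⟨⟨U, hU, rfl⟩, hx⟩
    exact ⟨U, ⟨hU, hx⟩, rfl⟩
  calc {V | V ∈ Set.preimage f '' 𝒰 ∧ x ∈ V}.encard
      ≤ (Set.preimage f '' {U | U ∈ 𝒰 ∧ f x ∈ U}).encard :=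
        Set.encard_le_encard preimages_through_x
    _ ≤ {U | U ∈ 𝒰 ∧ f x ∈ U}.encard := Set.encard_image_le _ _
    _ ≤ mult 𝒰 := le_iSup (fun y : Y => {U | U ∈ 𝒰 ∧ y ∈ U}.encard) (f x)

variable [MetricSpace X] [MetricSpace Y] {f : X → Y}

theorem UnifBounded.preimage (h𝒰 : UnifBounded 𝒰) (hf : UniformlyProper f) :
    UnifBounded (Set.preimage f '' 𝒰) := by
  obtain ⟨B, hB, hdiam⟩ := h𝒰
  obtain ⟨B', hB'⟩ := hf B
  refine ⟨max B' 0, le_max_right _ _, ?_⟩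
  rintro _ ⟨U, hU, rfl⟩
  refine ediam_le_of_forall_dist_le fun x hx x' hx' => ?_
  exact (hB' x x' (dist_le_of_ediam_le_ofReal hB (hdiam U hU) hx hx')).trans (le_max_left _ _)

theorem LebesgueGE.preimage {r s : ℝ} (h𝒰 : LebesgueGE 𝒰 s) (hr : 0 ≤ r)
    (hf : ∀ x x', dist x x' ≤ r → dist (f x) (f x') ≤ s) :
    LebesgueGE (Set.preimage f '' 𝒰) r := by
  intro A hA
  have ediam_image_le : ediam (f '' A) ≤ ENNReal.ofReal s := by
    refine ediam_le_of_forall_dist_le ?_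
    rintro _ ⟨x, hx, rfl⟩ _ ⟨x', hx', rfl⟩
    exact hf x x' (dist_le_of_ediam_le_ofReal hr hA hx hx')
  obtain ⟨U, hU, hAU⟩ := h𝒰 _ ediam_image_le
  exact ⟨f ⁻¹' U, ⟨U, hU, rfl⟩, Set.image_subset_iff.1 hAU⟩

end Preimage

theorem LebesgueGE.anti {X : Type*} [MetricSpace X] {𝒰 : Set (Set X)} {r s : ℝ}
    (h𝒰 : LebesgueGE 𝒰 s) (hrs : r ≤ s) : LebesgueGE 𝒰 r :=
  fun A hA => h𝒰 A (hA.trans (ENNReal.ofReal_le_ofReal hrs))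

theorem adFun_mono (X : Type*) [MetricSpace X] : Monotone (adFun X) := by
  refine fun r s hrs => tsub_le_tsub_right (sInf_le_sInf ?_) 1
  rintro m ⟨𝒰, hcover, hbdd, hLeb, rfl⟩
  exact ⟨𝒰, hcover, hbdd, hLeb.anti hrs, rfl⟩

section Maps

variable {X Y : Type*} [MetricSpace X] [MetricSpace Y] {f : X → Y}

theorem UniformlyProper.adFun_le (hf : UniformlyProper f) {r s : ℝ} (hr : 0 ≤ r)
    (hrs : ∀ x x', dist x x' ≤ r → dist (f x) (f x') ≤ s) : adFun X r ≤ adFun Y s := by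
  refine tsub_le_tsub_right (le_sInf ?_) 1
  rintro _ ⟨𝒰, hcover, hbdd, hLeb, rfl⟩
  refine sInf_le_of_le ?_ (mult_image_preimage_le f 𝒰)
  exact ⟨_, hcover.preimage f, hbdd.preimage hf, hLeb.preimage hr hrs, rfl⟩

theorem UniformlyProper.growLE_adFun (hf : UniformlyProper f) {a b : ℝ} (ha : 0 ≤ a)
    (hab : ∀ x x', dist (f x) (f x') ≤ a * dist x x' + b) : GrowLE (adFun X) (adFun Y) := by
  refine .of_forall_le_affine (adFun_mono Y) a b fun r hr => ?_
  refine hf.adFun_le hr.le fun x x' hxx' => (hab x x').trans ?_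
  gcongr

namespace IsQuasiIsometry

variable {lam eps C : ℝ}

theorem dist_le (hf : IsQuasiIsometry lam eps C f) (x x' : X) :
    dist x x' ≤ lam * (dist (f x) (f x') + eps) := by
  obtain ⟨hlam, -, -, hdist, -⟩ := hf
  have h := (hdist x x').1
  rwa [sub_le_iff_le_add, one_div, inv_mul_le_iff₀ (by positivity)] at h

theorem uniformlyProper (hf : IsQuasiIsometry lam eps C f) : UniformlyProper f := by
  have lam_nonneg : 0 ≤ lam := zero_le_one.trans hf.1
  refine fun B => ⟨lam * (B + eps), fun x x' hB => (hf.dist_le x x').trans ?_⟩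
  gcongr

theorem growLE_adFun (hf : IsQuasiIsometry lam eps C f) : GrowLE (adFun X) (adFun Y) :=
  hf.uniformlyProper.growLE_adFun (zero_le_one.trans hf.1) fun x x' => (hf.2.2.2.1 x x').2

theorem quasiInverse (hf : IsQuasiIsometry lam eps C f) {g : Y → X}
    (hg : ∀ y, dist y (f (g y)) ≤ C) :
    IsQuasiIsometry lam (lam * (2 * C + eps)) (lam * (C + eps)) g := by
  have dist_le_lam_mul := hf.dist_le
  obtain ⟨hlam, heps, hC, hdist, -⟩ := hf
  have lam_pos : 0 < lam := one_pos.trans_le hlam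
  refine ⟨hlam, by positivity, by positivity, fun y y' => ⟨?_, ?_⟩, fun x => ⟨f x, ?_⟩⟩
  · have dist_le_add : dist y y' ≤ lam * dist (g y) (g y') + (2 * C + eps) := by
      have := dist_triangle4_right y y' (f (g y)) (f (g y'))
      linarith [hg y, hg y', (hdist (g y) (g y')).2]
    have slack : 2 * C + eps ≤ lam * (lam * (2 * C + eps)) := by
      rw [← mul_assoc]
      exact le_mul_of_one_le_left (by positivity) (one_le_mul_of_one_le_of_one_le hlam hlam)
    rw [sub_le_iff_le_add, one_div, inv_mul_le_iff₀ lam_pos]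
    linarith
  · have dist_image_le : dist (f (g y)) (f (g y')) ≤ dist y y' + 2 * C := by
      have := dist_triangle4_left y y' (f (g y)) (f (g y'))
      linarith [hg y, hg y']
    calc dist (g y) (g y') ≤ lam * (dist (f (g y)) (f (g y')) + eps) := dist_le_lam_mul _ _
      _ ≤ lam * (dist y y' + 2 * C + eps) := by gcongr
      _ = lam * dist y y' + lam * (2 * C + eps) := by ring
  · calc dist x (g (f x)) ≤ lam * (dist (f x) (f (g (f x))) + eps) := dist_le_lam_mul _ _
      _ ≤ lam * (C + eps) := by gcongr; exact hg (f x)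

end IsQuasiIsometry

theorem QuasiIsometric.symm (h : QuasiIsometric X Y) : QuasiIsometric Y X := by
  obtain ⟨lam, eps, C, f, hf⟩ := h
  choose g hg using hf.2.2.2.2
  exact ⟨_, _, _, g, hf.quasiInverse hg⟩

theorem QuasiIsometric.growLE_adFun (h : QuasiIsometric X Y) : GrowLE (adFun X) (adFun Y) := by
  obtain ⟨_, _, _, _, hf⟩ := h
  exact hf.growLE_adFun

end Maps

theorem adFun_quasiIsometry_invariant_general {X Y : Type*} [MetricSpace X] [MetricSpace Y]
    (hQI : QuasiIsometric X Y) : GrowEquiv (adFun X) (adFun Y) :=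
  ⟨hQI.growLE_adFun, hQI.symm.growLE_adFun⟩

/-- Growth of the asymptotic dimension function is a quasi-isometry invariant
of (discrete) metric spaces with bounded geometry. -/
theorem adFun_quasiIsometry_invariant {X Y : Type*} [MetricSpace X] [MetricSpace Y]
    (hX : BoundedGeometry X) (hY : BoundedGeometry Y)
    (hQI : QuasiIsometric X Y) :
    GrowEquiv (adFun X) (adFun Y) :=
  adFun_quasiIsometry_invariant_general hQI

end AsDim
end
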